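/- arXiv:2108.02828 — 3 statements merged into one kernel-verified Lean document; each statement's English description precedes it below -/
import Mathlib

section
/- For every positive integer h, every c ∈ (1/h)ℤ with c > 0, and all real numbers s₀, d₀, there exists N > 0 such that for all real n₀ ≥ N the following holds. Suppose (δ, s, d) satisfies the closeness bounds (with parameters h, c, s₀, d₀, n₀), set n := n₀ − δ, and suppose c′ ∈ (1/h)ℤ and s′, d′ ∈ ℝ satisfy: (1) c′ < c; (2) n + c′ ≥ n₀ − c/3; (3) (s − s′)/(c − c′) > −n₀/4 − |s₀|·h; (4) (n + c′)² + 2(s′ − n²/2) ≥ 0; (5) d − d′ ≤ (s − s′)²/(2(c − c′)) + (c − c′)³/24; (6) (n³/2)c′ + n²( c′²/2 + 2c′(s−s′)/(c−c′) − s′ ) + n( −2c′s + ((s−s′)/(c−c′))(2c′c + c′² + 2s′) ) + 2s′² + (c′² + 2s′)·(sc′ − cs′)/(c − c′) ≥ 3d′(n + c′). Then either 0 < c′ < c, or c′ = 0 and δ = 0. -/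
/-- `x` lies in the lattice `(1/h)·ℤ`. -/
def inLat (h : ℕ) (x : ℝ) : Prop := ∃ k : ℤ, x = (k : ℝ) / h

/-- The closeness bounds (with parameters `h, c, s₀, d₀, n₀`) on a triple `(δ, s, d)`. -/
def CloseBounds (h : ℕ) (c s₀ d₀ n₀ δ s d : ℝ) : Prop :=
  inLat h δ ∧ 0 ≤ δ ∧ δ ≤ c / 3 ∧
  (-n₀ * δ - |s₀| ≤ s) ∧
  (s ≤ -(3 / 4) * n₀ * δ + (c + |s₀| * h) * δ + s₀) ∧
  ((15 / 32) * n₀ ^ 2 * δ - n₀ * δ * (|s₀| * h + c) - δ * (s₀ * h) ^ 2 + d₀ ≤ d)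

/-- The rescaled form of inequality (6). -/
noncomputable def Gfun (c P ε a δ σ t : ℝ) : ℝ :=
  -(1 - ε * δ) ^ 3 * a / 2
    + (1 - ε * δ) ^ 2 * (ε * a ^ 2 / 2 + 2 * a * t - (σ + (c + a) * t))
    + (1 - ε * δ) * (ε * (2 * a * σ) - t * (ε * (a ^ 2 - 2 * a * c) + 2 * (σ + (c + a) * t)))
    + ε * (2 * (σ + (c + a) * t) ^ 2)
    - ε * ((ε * a ^ 2 + 2 * (σ + (c + a) * t)) * (σ + c * t))
    - 3 * (15 / 32 * δ - ε * P - (c + a) * t ^ 2 / 2) * (1 - ε * δ - ε * a)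

lemma Gfun_unif (c P B κ : ℝ) (hκ : 0 < κ) :
    ∃ r : ℝ, 0 < r ∧ ∀ ε a δ σ t : ℝ, 0 ≤ ε → ε < r → ε ≤ 1 → a ∈ Set.Icc (-B) B →
      δ ∈ Set.Icc (-B) B → σ ∈ Set.Icc (-B) B → t ∈ Set.Icc (-B) B →
      Gfun c P ε a δ σ t < Gfun c P 0 a δ σ t + κ := by
  let f : ℝ × ℝ × ℝ × ℝ × ℝ → ℝ := fun p => Gfun c P p.1 p.2.1 p.2.2.1 p.2.2.2.1 p.2.2.2.2
  have hf : Continuous f := by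
    unfold f Gfun
    fun_prop
  let K : Set (ℝ × ℝ × ℝ × ℝ × ℝ) := Set.Icc 0 1 ×ˢ Set.Icc (-B) B ×ˢ Set.Icc (-B) B ×ˢ
    Set.Icc (-B) B ×ˢ Set.Icc (-B) B
  have hK : IsCompact K := isCompact_Icc.prod (isCompact_Icc.prod (isCompact_Icc.prod
    (isCompact_Icc.prod isCompact_Icc)))
  have hu := hK.uniformContinuousOn_of_continuous hf.continuousOn
  rw [Metric.uniformContinuousOn_iff] at hu
  obtain ⟨r, hr, H⟩ := hu κ hκ
  refine ⟨r, hr, ?_⟩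
  intro ε a δ σ t h0 h1 h2 ha hd hs ht
  have := H (ε, a, δ, σ, t) ⟨⟨h0, h2⟩, ha, hd, hs, ht⟩ (0, a, δ, σ, t)
    ⟨⟨le_refl _, zero_le_one⟩, ha, hd, hs, ht⟩ (by
      simp [Prod.dist_eq, abs_of_nonneg h0, h1, hr])
  rw [Real.dist_eq] at this
  have := (abs_lt.1 this).2
  simp only [f] at this
  linarith

lemma F_bound (c P a δ σ t ρ : ℝ) (ha : 0 ≤ a) (hδ : 0 ≤ δ) (hρ0 : 0 ≤ ρ) (hρ : ρ ≤ 1 / 16)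
    (hc : 0 < c) (hσ : -δ - ρ ≤ σ) (ht : t ≤ 1 / 4 + ρ) (ht' : -(1 / 2) ≤ t)
    (he : a + 3 / 4 * δ - ρ ≤ (c + a) * t) :
    Gfun c P 0 a δ σ t ≤ -(a + δ) / 2 + 3 * ρ := by
  have e : Gfun c P 0 a δ σ t = -a / 2 + 2 * a * t - σ * (1 + 2 * t) - (c + a) * t
      - (c + a) * t ^ 2 / 2 - 45 / 32 * δ := by
    unfold Gfun; ring
  rw [e]
  have h1 : a * t ≤ a * (1 / 4 + ρ) := by gcongr
  have h2 : -σ * (1 + 2 * t) ≤ (δ + ρ) * (1 + 2 * t) := by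
    apply mul_le_mul_of_nonneg_right <;> linarith
  have h3 : (δ + ρ) * (1 + 2 * t) ≤ (δ + ρ) * (1 + 2 * (1 / 4 + ρ)) := by gcongr
  have h4 : 0 ≤ (c + a) * t ^ 2 := by positivity
  have h5 : a * ρ ≤ a * (1 / 16) := by gcongr
  have h6 : (δ + ρ) * ρ ≤ (δ + ρ) * (1 / 16) := by gcongr
  linarith

lemma lat_pos (h : ℕ) (hh : 0 < h) (x : ℝ) (hx : inLat h x) (h0 : 0 < x) : 1 / (h : ℝ) ≤ x := by
  obtain ⟨k, rfl⟩ := hx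
  have hh' : (0 : ℝ) < h := by exact_mod_cast hh
  have hk : (0 : ℝ) < k := by
    by_contra hk
    exact absurd h0 (not_lt.2 (div_nonpos_of_nonpos_of_nonneg (not_lt.1 hk) hh'.le))
  have : (1 : ℝ) ≤ k := by
    have : 0 < k := by exact_mod_cast hk
    exact_mod_cast this
  gcongr

set_option maxHeartbeats 1000000 in
theorem stmt0 (h : ℕ) (hh : 0 < h) (c : ℝ) (hc : inLat h c) (hc0 : 0 < c)
    (s₀ d₀ : ℝ) :
    ∃ N : ℝ, 0 < N ∧ ∀ n₀ : ℝ, N ≤ n₀ →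
      ∀ δ s d : ℝ, CloseBounds h c s₀ d₀ n₀ δ s d →
      ∀ n : ℝ, n = n₀ - δ →
      ∀ c' s' d' : ℝ, inLat h c' →
        c' < c →
        n + c' ≥ n₀ - c / 3 →
        (s - s') / (c - c') > -n₀ / 4 - |s₀| * h →
        (n + c') ^ 2 + 2 * (s' - n ^ 2 / 2) ≥ 0 →
        d - d' ≤ (s - s') ^ 2 / (2 * (c - c')) + (c - c') ^ 3 / 24 →
        (n ^ 3 / 2) * c' + n ^ 2 * (c' ^ 2 / 2 + 2 * c' * (s - s') / (c - c') - s')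
          + n * (-2 * c' * s + ((s - s') / (c - c')) * (2 * c' * c + c' ^ 2 + 2 * s'))
          + 2 * s' ^ 2 + (c' ^ 2 + 2 * s') * ((s * c' - c * s') / (c - c'))
          ≥ 3 * d' * (n + c') →
        (0 < c' ∧ c' < c) ∨ (c' = 0 ∧ δ = 0) := by
  have hh' : (0 : ℝ) < h := by exact_mod_cast hh
  have hh1 : (1 : ℝ) ≤ h := by exact_mod_cast hh
  obtain ⟨k, hk⟩ : ∃ k, k = |s₀| * h := ⟨_, rfl⟩
  have hk0 : 0 ≤ k := by rw [hk]; positivity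
  have hs0 := abs_nonneg s₀
  have hs0' := le_abs_self s₀
  have hd0 := abs_nonneg d₀
  have hd0' := neg_abs_le d₀
  have hch : 1 / (h : ℝ) ≤ c := lat_pos h hh c hc hc0
  obtain ⟨P, hP⟩ : ∃ P, P = c * (k + c) + c * (s₀ * h) ^ 2 + |d₀| + (2 * c) ^ 3 / 24 := ⟨_, rfl⟩
  obtain ⟨R, hR⟩ : ∃ R, R = (c + k) * c + |s₀| + k + 2 * c ^ 2 := ⟨_, rfl⟩
  have hR0 : 0 < R := by rw [hR]; positivity
  have hkR : k ≤ R := by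
    have : 0 ≤ (c + k) * c + |s₀| + 2 * c ^ 2 := by positivity
    linarith
  have hsR : |s₀| ≤ R := by
    have : 0 ≤ (c + k) * c + k + 2 * c ^ 2 := by positivity
    linarith
  have hcR : (c + k) * c + |s₀| ≤ R := by
    have : 0 ≤ k + 2 * c ^ 2 := by positivity
    linarith
  obtain ⟨B, hB⟩ : ∃ B, B = c + 1 := ⟨_, rfl⟩
  obtain ⟨r, hr, HG⟩ := Gfun_unif c P B (1 / (8 * h)) (by positivity)
  refine ⟨1 + c + 2 / r + R * (16 * h), by positivity, ?_⟩
  intro n₀ hn δ s d hcl n hnd c' s' d' hc' h1 h2 h3 h4 h5 h6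
  obtain ⟨hδl, hδ0, hδc, hs1, hs2, hdd⟩ := hcl
  rw [← hk] at hs2 hdd h3
  have hq : 0 < 2 / r := by positivity
  have hq2 : 0 < R * (16 * h) := by positivity
  have hn1 : 1 ≤ n₀ := by linarith
  have hn0 : 0 < n₀ := by linarith
  by_contra hcon
  have hc'0 : c' ≤ 0 := by
    by_contra hx
    exact hcon (Or.inl ⟨not_le.1 hx, h1⟩)
  obtain ⟨a, ha⟩ : ∃ a, a = -c' := ⟨_, rfl⟩
  obtain rfl : c' = -a := by linarith
  have ha0 : 0 ≤ a := by linarith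
  have hac : a ≤ c / 3 := by linarith
  have had : 1 / (h : ℝ) ≤ a + δ := by
    rcases ha0.eq_or_lt with h0 | h0
    · rcases hδ0.eq_or_lt with h0' | h0'
      · exact absurd (Or.inr ⟨by rw [← h0]; simp, h0'.symm⟩) hcon
      · have := lat_pos h hh δ hδl h0'
        linarith
    · have : inLat h a := by
        obtain ⟨z, hz⟩ := hc'
        refine ⟨-z, ?_⟩
        push_cast
        rw [neg_div, ← hz]; ring
      have := lat_pos h hh a this h0
      linarith
  -- rescaling
  obtain ⟨ε, hε⟩ : ∃ ε, ε = 1 / n₀ := ⟨_, rfl⟩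
  have hε0 : 0 < ε := by rw [hε]; positivity
  have hεn : n₀ * ε = 1 := by rw [hε]; field_simp
  have hε1 : ε ≤ 1 := by rw [hε, div_le_one hn0]; exact hn1
  have hεr : ε < r := by
    rw [hε, div_lt_iff₀ hn0]
    have : r * (2 / r) = 2 := by field_simp
    have : r * (2 / r) ≤ r * n₀ := by gcongr; linarith
    linarith
  have hεR : ε * R ≤ 1 / (16 * h) := by
    rw [hε, div_mul_eq_mul_div, one_mul, div_le_div_iff₀ hn0 (by positivity)]
    linarith
  obtain ⟨σ, hσ⟩ : ∃ σ, σ = ε * s := ⟨_, rfl⟩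
  have hs : s = n₀ * σ := by rw [hσ, ← mul_assoc, hεn, one_mul]
  have hep : 0 < c + a := by linarith
  obtain ⟨t, ht⟩ : ∃ t, t = -ε * ((s - s') / (c - -a)) := ⟨_, rfl⟩
  have hsub : c - -a = c + a := by ring
  have hm : (s - s') / (c - -a) = - (n₀ * t) := by
    rw [ht]
    linear_combination (-(s - s') / (c - -a)) * hεn
  have hs' : s' = n₀ * (σ + (c + a) * t) := by
    rw [hsub, div_eq_iff hep.ne'] at hm
    linear_combination (-1) * hm + hs
  have hlast : (s * -a - c * s') / (c - -a) = - n₀ * (σ + c * t) := by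
    rw [hsub, div_eq_iff hep.ne', hs', hs]; ring
  have hmid : 2 * -a * (s - s') / (c - -a) = 2 * a * (n₀ * t) := by
    rw [mul_div_assoc, hm]; ring
  have hsq : (s - s') ^ 2 / (2 * (c - -a)) = (c + a) * (n₀ * t) ^ 2 / 2 := by
    rw [hsub, hs, hs']; field_simp; ring
  rw [hlast, hmid, hm] at h6
  rw [hsq] at h5
  rw [hm] at h3
  rw [hs] at hs1 hs2
  -- bounds
  have bk : ε * k ≤ ε * R := by
    gcongr
  have bs : ε * |s₀| ≤ ε * R := by
    gcongr
  have b1 : -δ - ε * R ≤ σ := by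
    have := mul_le_mul_of_nonneg_left hs1 hε0.le
    have e1 : ε * (n₀ * σ) = σ := by linear_combination σ * hεn
    have e2 : ε * (-n₀ * δ - |s₀|) = -δ - ε * |s₀| := by linear_combination -δ * hεn
    linarith
  have b2 : σ ≤ -(3 / 4) * δ + ε * ((c + k) * c + |s₀|) := by
    have := mul_le_mul_of_nonneg_left hs2 hε0.le
    have e1 : ε * (n₀ * σ) = σ := by linear_combination σ * hεn
    have e2 : ε * (-(3 / 4) * n₀ * δ + (c + k) * δ + s₀) = -(3 / 4) * δ + ε * ((c + k) * δ + s₀) := by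
      linear_combination -(3 / 4) * δ * hεn
    have e3 : ε * ((c + k) * δ + s₀) ≤ ε * ((c + k) * c + |s₀|) := by
      gcongr; linarith
    linarith
  have b3 : t ≤ 1 / 4 + ε * R := by
    have := mul_lt_mul_of_pos_left h3 hε0
    have e1 : ε * -(n₀ * t) = -t := by linear_combination -t * hεn
    have e2 : ε * (-n₀ / 4 - k) = -1 / 4 - ε * k := by linear_combination -1 / 4 * hεn
    linarith
  have b4 : a + 3 / 4 * δ - ε * R ≤ (c + a) * t := by
    rw [hs', hnd] at h4
    have := mul_le_mul_of_nonneg_left h4 hε0.le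
    have e1 : ε * ((n₀ - δ + -a) ^ 2 + 2 * (n₀ * (σ + (c + a) * t) - (n₀ - δ) ^ 2 / 2))
       = 2 * (σ + (c + a) * t) - 2 * a + ε * (2 * δ * a + a ^ 2) := by
      linear_combination (2 * (σ + (c + a) * t) - 2 * a) * hεn
    have e3 : ε * (2 * δ * a + a ^ 2) ≤ ε * (4 * c ^ 2) := by
      have hac' : a ≤ c := by linarith
      have hdc' : δ ≤ c := by linarith
      have g1 : δ * a ≤ c * c := by gcongr
      have g2 : a ^ 2 ≤ c ^ 2 := by gcongr
      have g3 : 0 ≤ c ^ 2 := by positivity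
      gcongr
      linarith
    have e4 : ε * R = ε * ((c + k) * c + |s₀|) + ε * k + ε * (2 * c ^ 2) := by rw [hR]; ring
    have := mul_nonneg hε0.le hk0
    linarith
  have hρ : 1 / (16 * (h : ℝ)) ≤ 1 / 16 := by
    rw [div_le_div_iff₀ (by positivity) (by norm_num)]; linarith
  have b5 : -(1 / 2) ≤ t := by
    by_contra hx
    push Not at hx
    have : (c + a) * t ≤ (c + a) * (-(1 / 2)) := by gcongr
    have e : 1 / (16 * (h : ℝ)) = 1 / h / 16 := by field_simp
    linarith
  have b6 := F_bound c P a δ σ t (ε * R) ha0 hδ0 (by positivity) (by linarith) hc0 b1 b3 b5 b4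
  have bR : ε * ((c + k) * c + |s₀|) ≤ ε * R := by
    gcongr
  have b7 := HG ε a δ σ t hε0.le hεr hε1 ⟨by linarith, by linarith⟩ ⟨by linarith, by linarith⟩
    ⟨by linarith, by linarith⟩ ⟨by linarith, by linarith⟩
  have b8 : 0 ≤ Gfun c P ε a δ σ t := by
    have hna : 0 < n + -a := by linarith
    have hL : n₀ ^ 2 * (15 / 32 * δ - ε * P - (c + a) * t ^ 2 / 2) ≤ d' := by
      have e1 : n₀ ^ 2 * (ε * P) = n₀ * P := by linear_combination n₀ * P * hεn
      have e2 : (c - -a) ^ 3 ≤ (2 * c) ^ 3 := by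
        rw [hsub]; gcongr; linarith
      have e3 : δ * (k + c) ≤ c * (k + c) := by gcongr; linarith
      have e3' := mul_le_mul_of_nonneg_left e3 hn0.le
      have e4 : δ * (s₀ * h) ^ 2 ≤ c * (s₀ * h) ^ 2 := by gcongr; linarith
      have e5 : n₀ * P = n₀ * (c * (k + c)) + n₀ * (c * (s₀ * h) ^ 2 + |d₀| + (2 * c) ^ 3 / 24) := by
        rw [hP]; ring
      have e6 : 1 * (c * (s₀ * h) ^ 2 + |d₀| + (2 * c) ^ 3 / 24) ≤
        n₀ * (c * (s₀ * h) ^ 2 + |d₀| + (2 * c) ^ 3 / 24) := by gcongr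
      linarith
    have hL2 := mul_le_mul_of_nonneg_right hL hna.le
    have key : 0 ≤ n₀ ^ 3 * Gfun c P ε a δ σ t := by
      have e : n₀ ^ 3 * Gfun c P ε a δ σ t =
        n ^ 3 / 2 * -a + n ^ 2 * ((-a) ^ 2 / 2 + 2 * a * (n₀ * t) - s') +
          n * (-2 * -a * s + -(n₀ * t) * (2 * -a * c + (-a) ^ 2 + 2 * s')) + 2 * s' ^ 2 +
          ((-a) ^ 2 + 2 * s') * (-n₀ * (σ + c * t))
        - 3 * (n₀ ^ 2 * (15 / 32 * δ - ε * P - (c + a) * t ^ 2 / 2) * (n + -a)) := by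
        rw [hs', hs, hnd, hε]
        unfold Gfun
        field_simp
        ring
      rw [e]
      linarith
    exact nonneg_of_mul_nonneg_right key (by positivity)
  have e1 : 1 / (16 * (h : ℝ)) = 1 / h / 16 := by field_simp
  have e2 : 1 / (8 * (h : ℝ)) = 1 / h / 8 := by field_simp
  have e3 : 0 < 1 / (h : ℝ) := by positivity
  linarith
end

section
/- For every positive integer h, every c ∈ (1/h)ℤ with c > 0, and all real numbers s₀, d₀, there exists N > 0 such that for all real n₀ ≥ N the following holds. Suppose (δ, s, d) satisfies the closeness bounds (with parameters h, c, s₀, d₀, n₀), set n := n₀ − δ, and suppose c′ ∈ (1/h)ℤ with δ + (2/3)c ≤ c′ < c, and s′, d′ ∈ ℝ satisfy: −n₀/4 − |s₀|·h < (s − s′)/(c − c′) ≤ s/c, and d − d′ ≤ (s − s′)²/(2(c − c′)) + (c − c′)³/24. Define δ′ := δ + c − c′, s̃ := s′ − (c − c′)n + (1/2)(c − c′)², and d̃ := d′ + (1/2)n²(c − c′) − (1/2)n(c − c′)² + (1/6)(c − c′)³. Then δ′ ∈ (1/h)ℤ with 0 < δ′ ≤ c/3, and the triple (δ′, s̃,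 d̃) again satisfies the closeness bounds (with the same parameters h, c, s₀, d₀, n₀). -/
theorem stmt2 (h : ℕ) (hh : 0 < h) (c : ℝ) (hc : inLat h c) (hc0 : 0 < c)
    (s₀ d₀ : ℝ) :
    ∃ N : ℝ, 0 < N ∧ ∀ n₀ : ℝ, N ≤ n₀ →
      ∀ δ s d : ℝ, CloseBounds h c s₀ d₀ n₀ δ s d →
      ∀ n : ℝ, n = n₀ - δ →
      ∀ c' s' d' : ℝ, inLat h c' →
        δ + (2 / 3) * c ≤ c' → c' < c →
        -n₀ / 4 - |s₀| * h < (s - s') / (c - c') →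
        (s - s') / (c - c') ≤ s / c →
        d - d' ≤ (s - s') ^ 2 / (2 * (c - c')) + (c - c') ^ 3 / 24 →
        ∀ δ' sTilde dTilde : ℝ,
          δ' = δ + c - c' →
          sTilde = s' - (c - c') * n + (1 / 2) * (c - c') ^ 2 →
          dTilde = d' + (1 / 2) * n ^ 2 * (c - c') - (1 / 2) * n * (c - c') ^ 2
                + (1 / 6) * (c - c') ^ 3 →
          inLat h δ' ∧ 0 < δ' ∧ δ' ≤ c / 3 ∧
            CloseBounds h c s₀ d₀ n₀ δ' sTilde dTilde := by
  have hhR : (0:ℝ) < h := by exact_mod_cast hh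
  have hch : 1 ≤ c * h := by
    obtain ⟨k, hk⟩ := hc
    have h1 : c * h = k := by rw [hk]; field_simp
    have h2 : (0:ℝ) < k := by rw [← h1]; positivity
    have h3 : (1:ℤ) ≤ k := by
      have : (0:ℤ) < k := by exact_mod_cast h2
      omega
    rw [h1]; exact_mod_cast h3
  have hs0 : 0 ≤ |s₀| := abs_nonneg _
  have hA2 : (s₀ * h) ^ 2 = (|s₀| * h) ^ 2 := by rw [mul_pow, mul_pow, sq_abs]
  have hsA : s₀ ≤ |s₀| * h * c := by
    have := le_abs_self s₀
    nlinarith [mul_le_mul_of_nonneg_left hch hs0]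
  have hA0 : 0 ≤ |s₀| * h := by positivity
  obtain ⟨kc, hkc⟩ := hc
  refine ⟨4 / 3 * (c + |s₀| * h) + 1, by positivity, ?_⟩
  rintro n₀ hN δ s d ⟨⟨kδ, hkδ⟩, hδ0, hδc, hsl, hsu, hd⟩ n hn c' s' d' ⟨k', hk'⟩ hc1 hc2 ht1 ht2 hdd
    δ' sT dT hδ' hsT hdT
  have hlat : inLat h δ' := ⟨kδ + kc - k', by rw [hδ', hkδ, hkc, hk']; push_cast; ring⟩
  rw [hA2] at hd
  unfold CloseBounds
  rw [hA2]
  clear hkδ hkc hk' hA2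
  generalize |s₀| * (h:ℝ) = A at *
  obtain ⟨e, he⟩ : ∃ e, e = c - c' := ⟨_, rfl⟩
  rw [← he] at ht1 ht2 hdd hsT hdT
  have he0 : 0 < e := by linarith
  obtain ⟨t, hte⟩ : ∃ t, t = (s - s') / e := ⟨_, rfl⟩
  rw [← hte] at ht1 ht2
  have hss : s - s' = t * e := by rw [hte]; field_simp
  have hsq : (s - s') ^ 2 / (2 * e) = t ^ 2 * e / 2 := by rw [hss]; field_simp
  rw [hsq] at hdd
  have hδe : δ + e ≤ c / 3 := by linarith
  have hn0 : 0 < n₀ := by linarith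
  have htc : t * c ≤ s := (le_div_iff₀ hc0).1 ht2
  have htA : t ≤ A := by
    have h1 : s ≤ A * c := by
      have h0 : 0 ≤ (3 / 4 * n₀ - (c + A)) * δ := mul_nonneg (by linarith) hδ0
      linarith
    exact le_of_mul_le_mul_right (htc.trans h1) hc0
  have ht2 : t ^ 2 ≤ (n₀ / 4 + A) ^ 2 := by
    apply sq_le_sq' <;> linarith
  have hδ'e : δ' = δ + e := by linarith
  have hq : e * (δ + e) ≤ e * (c / 3) := mul_le_mul_of_nonneg_left hδe he0.le
  have hp : 0 ≤ δ * e := by positivity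
  have hp2 : 0 ≤ e ^ 2 := by positivity
  refine ⟨hlat, by linarith, by linarith, hlat, by linarith, by linarith, ?_, ?_, ?_⟩
  · have hts : t * e ≤ s * (e / c) := by
      have : t * e = (t * c) * (e / c) := by field_simp
      rw [this]
      exact mul_le_mul_of_nonneg_right htc (by positivity)
    have hr0 : 0 ≤ e / c := by positivity
    have hr1 : e / c ≤ 1 := by rw [div_le_one hc0]; linarith
    generalize e / c = r at *
    have h1 : 0 ≤ (s + n₀ * δ + |s₀|) * (1 - r) := mul_nonneg (by linarith) (by linarith)
    have h2 : 0 ≤ (n₀ * δ + |s₀|) * r := by positivity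
    rw [hsT, hn, hδ'e]
    have : s' = s - t * e := by linarith
    rw [this]
    linarith
  · have h1 : (-n₀ / 4 - A) * e ≤ t * e := mul_le_mul_of_nonneg_right ht1.le he0.le
    have : s' = s - t * e := by linarith
    rw [hsT, hn, hδ'e, this]
    linarith [mul_pos he0 hc0]
  · have h1 : t ^ 2 * e ≤ (n₀ / 4 + A) ^ 2 * e := mul_le_mul_of_nonneg_right ht2 he0.le
    have h2 : n₀ * (δ * e + e ^ 2 / 2) ≤ n₀ * (c * e) :=
      mul_le_mul_of_nonneg_left (by linarith [mul_pos he0 hc0]) hn0.le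
    have h3 : 0 ≤ n₀ * A * e := by positivity
    have h4 : 0 ≤ A ^ 2 * e := by positivity
    have h5 : 0 ≤ δ ^ 2 * e := by positivity
    have h6 : 0 ≤ δ * e ^ 2 := by positivity
    have h7 : 0 ≤ e ^ 3 := by positivity
    rw [hdT, hn, hδ'e]
    linarith
end

section
/- Let c > 0 and s₀, d₀ be real numbers. There exist N > 0 and K > 0 such that for all real n₀ ≥ N the quadratic equation in b given by 2b² = A·b + B, where A := −n₀ + (n₀(6s₀ + c²) + 4(cs₀ + 3d₀))/(2cn₀ + c² + 2s₀) and B := n₀² + (n₀²(6s₀ − c²) + 4(3d₀n₀ + 3d₀c − 2s₀²))/(2cn₀ + c² + 2s₀), has exactly two real solutions b₁ < b₂, and these satisfy |b₁ − (−n₀ + c/3)| ≤ K/n₀ and |b₂ − (n₀/2 − c/12 + 3s₀/(2c))| ≤ K/n₀. -/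
lemma core_aux (n p q e1 e2 E M : ℝ) (hn : 1 ≤ n) (hT : n ≤ 2 * (q - p))
    (hM : M < n) (he1 : |e1| ≤ E / n)
    (hD : |4 * (p + q) * e1 + e1 ^ 2 + 8 * e2| ≤ M) (A B : ℝ)
    (hA : A = 2 * (p + q) + e1) (hB : B = -2 * p * q + e2) :
    ∃ b₁ b₂ : ℝ, b₁ < b₂ ∧
      (∀ b : ℝ, 2 * b ^ 2 = A * b + B ↔ b = b₁ ∨ b = b₂) ∧
      |b₁ - p| ≤ (E + M) / n ∧ |b₂ - q| ≤ (E + M) / n := by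
  have hDT : A ^ 2 + 8 * B - (2 * (q - p)) ^ 2 = 4 * (p + q) * e1 + e1 ^ 2 + 8 * e2 := by
    subst hA hB; ring
  rw [← hDT] at hD
  have hD' := abs_le.mp hD
  have hpos : 0 < A ^ 2 + 8 * B := by nlinarith
  obtain ⟨S, hS⟩ : ∃ S, S = √(A ^ 2 + 8 * B) := ⟨_, rfl⟩
  have hS0 : 0 < S := hS ▸ Real.sqrt_pos.mpr hpos
  have hS2 : S ^ 2 = A ^ 2 + 8 * B := hS ▸ Real.sq_sqrt hpos.le
  have hn0 : 0 < n := by linarith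
  have hST : |S - 2 * (q - p)| ≤ M / n := by
    rw [le_div_iff₀ hn0]
    have h : |S - 2 * (q - p)| * (S + 2 * (q - p)) ≤ M := by
      rw [← abs_of_pos (show 0 < S + 2 * (q - p) by linarith), ← abs_mul]
      have e : (S - 2 * (q - p)) * (S + 2 * (q - p)) = A ^ 2 + 8 * B - (2 * (q - p)) ^ 2 := by
        rw [← hS2]; ring
      rw [e]; exact hD
    nlinarith [abs_nonneg (S - 2 * (q - p))]
  have h1 := abs_le.mp he1
  have h2 := abs_le.mp hST
  refine ⟨(A - S) / 4, (A + S) / 4, by linarith, ?_, ?_, ?_⟩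
  · intro b
    have hf : 2 * b ^ 2 - (A * b + B) = 2 * ((b - (A - S) / 4) * (b - (A + S) / 4)) := by
      linear_combination (1 / 8) * hS2
    rw [← sub_eq_zero, hf]
    simp [sub_eq_zero]
  · rw [add_div E M n, abs_le]; subst hA; constructor <;> linarith
  · rw [add_div E M n, abs_le]; subst hA; constructor <;> linarith

theorem stmt8 (c s₀ d₀ : ℝ) (hc : 0 < c) :
    ∃ N : ℝ, 0 < N ∧ ∃ K : ℝ, 0 < K ∧ ∀ n₀ : ℝ, N ≤ n₀ →
      ∀ A B : ℝ,
        A = -n₀ + (n₀ * (6 * s₀ + c ^ 2) + 4 * (c * s₀ + 3 * d₀))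
              / (2 * c * n₀ + c ^ 2 + 2 * s₀) →
        B = n₀ ^ 2 + (n₀ ^ 2 * (6 * s₀ - c ^ 2)
              + 4 * (3 * d₀ * n₀ + 3 * d₀ * c - 2 * s₀ ^ 2))
              / (2 * c * n₀ + c ^ 2 + 2 * s₀) →
        ∃ b₁ b₂ : ℝ, b₁ < b₂ ∧
          (∀ b : ℝ, 2 * b ^ 2 = A * b + B ↔ b = b₁ ∨ b = b₂) ∧
          |b₁ - (-n₀ + c / 3)| ≤ K / n₀ ∧
          |b₂ - (n₀ / 2 - c / 12 + 3 * s₀ / (2 * c))| ≤ K / n₀ := by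
  obtain ⟨r, hr⟩ : ∃ r, r = s₀ / c := ⟨_, rfl⟩
  have hs : s₀ = r * c := by rw [hr]; field_simp
  have hy : 3 * s₀ / (2 * c) = 3 * r / 2 := by rw [hr]; field_simp
  rw [hy]
  clear hr hy
  subst hs
  obtain ⟨k1, hk1⟩ : ∃ k, k = 4 * (c * (r * c) + 3 * d₀)
    - (3 * r + c / 2) * (c ^ 2 + 2 * (r * c)) := ⟨_, rfl⟩
  obtain ⟨k2, hk2⟩ : ∃ k, k = 12 * d₀ - (3 * r - c / 2) * (c ^ 2 + 2 * (r * c)) := ⟨_, rfl⟩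
  obtain ⟨k3, hk3⟩ : ∃ k, k = 4 * (3 * d₀ * c - 2 * (r * c) ^ 2) := ⟨_, rfl⟩
  obtain ⟨y, hy⟩ : ∃ y, y = -c / 12 + 3 * r / 2 := ⟨_, rfl⟩
  obtain ⟨E1, hE1⟩ : ∃ E, E = |k1| / c := ⟨_, rfl⟩
  obtain ⟨E2, hE2⟩ : ∃ E, E = (|k2| + |k3|) / c := ⟨_, rfl⟩
  have hE1p : 0 ≤ E1 := by rw [hE1]; positivity
  have hE2p : 0 ≤ E2 := by rw [hE2]; positivity
  obtain ⟨M, hM⟩ : ∃ M, M = 4 * (1 + |y + c / 3|) * E1 + E1 ^ 2 + 8 * (E2 + |2 * c * y / 3|) :=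
    ⟨_, rfl⟩
  have hMp : 0 ≤ M := by rw [hM]; positivity
  refine ⟨1 + 2 * |r| + |2 * y - 2 * c / 3| + M, by positivity, E1 + M + 1, by positivity, ?_⟩
  intro n hn A B hA hB
  have hn1 : 1 ≤ n := by
    linarith [abs_nonneg r, abs_nonneg (2 * y - 2 * c / 3)]
  have hn0 : 0 < n := by linarith
  obtain ⟨D, hD⟩ : ∃ D, D = 2 * c * n + c ^ 2 + 2 * (r * c) := ⟨_, rfl⟩
  have hDn : c * n ≤ D := by
    have : 0 ≤ n + 2 * r := by
      linarith [neg_abs_le r, abs_nonneg (2 * y - 2 * c / 3)]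
    nlinarith [mul_nonneg hc.le this, sq_nonneg c]
  have hcn : 0 < c * n := by positivity
  have hD0 : 0 < D := by linarith
  rw [← hD] at hA hB
  have he1 : |k1 / D| ≤ E1 / n := by
    rw [abs_div, abs_of_pos hD0, hE1, div_div]
    exact div_le_div_of_nonneg_left (abs_nonneg _) hcn hDn
  have he1' : |k1 / D| ≤ E1 := he1.trans (div_le_self hE1p hn1)
  have he2 : |(k2 * n + k3) / D| ≤ E2 := by
    rw [abs_div, abs_of_pos hD0, hE2, div_le_div_iff₀ hD0 hc]
    have h1 : |k2 * n + k3| ≤ (|k2| + |k3|) * n := by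
      refine (abs_add_le _ _).trans ?_
      rw [abs_mul, abs_of_pos hn0]
      nlinarith [abs_nonneg k3]
    calc |k2 * n + k3| * c ≤ (|k2| + |k3|) * n * c := by gcongr
      _ = (|k2| + |k3|) * (c * n) := by ring
      _ ≤ _ := by gcongr
  have hA' : A = 2 * ((-n + c / 3) + (n / 2 - c / 12 + 3 * r / 2)) + k1 / D := by
    rw [hA, hk1]; field_simp; rw [hD]; ring
  have hB' : B = -2 * (-n + c / 3) * (n / 2 - c / 12 + 3 * r / 2)
      + ((k2 * n + k3) / D + 2 * c * y / 3) := by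
    rw [hB, hk2, hk3, hy]; field_simp; rw [hD]; ring
  obtain ⟨b₁, b₂, h, h', h1, h2⟩ := core_aux n (-n + c / 3) (n / 2 - c / 12 + 3 * r / 2) (k1 / D)
    ((k2 * n + k3) / D + 2 * c * y / 3) E1 M hn1
    (by linarith [neg_abs_le (2 * y - 2 * c / 3), abs_nonneg r])
    (by linarith [abs_nonneg (2 * y - 2 * c / 3), abs_nonneg r]) he1
    (by
      have hpq : |(-n + c / 3) + (n / 2 - c / 12 + 3 * r / 2)| ≤ (1 + |y + c / 3|) * n := by
        have e : (-n + c / 3) + (n / 2 - c / 12 + 3 * r / 2) = -(n / 2) + (y + c / 3) := by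
          rw [hy]; ring
        rw [e]
        refine (abs_add_le _ _).trans ?_
        rw [abs_neg, abs_of_pos (by positivity)]
        nlinarith [abs_nonneg (y + c / 3)]
      have ha : |4 * ((-n + c / 3) + (n / 2 - c / 12 + 3 * r / 2)) * (k1 / D)|
          ≤ 4 * (1 + |y + c / 3|) * E1 := by
        rw [abs_mul, abs_mul, abs_of_pos (show (0:ℝ) < 4 by norm_num)]
        calc _ ≤ 4 * ((1 + |y + c / 3|) * n) * (E1 / n) := by gcongr
          _ = _ := by field_simp
      have hb : |(k1 / D) ^ 2| ≤ E1 ^ 2 := by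
        rw [abs_pow]; gcongr
      have hc' : |8 * ((k2 * n + k3) / D + 2 * c * y / 3)| ≤ 8 * (E2 + |2 * c * y / 3|) := by
        rw [abs_mul, abs_of_pos (show (0:ℝ) < 8 by norm_num)]
        gcongr
        exact (abs_add_le _ _).trans (by gcongr)
      rw [hM]
      refine (abs_add_le _ _).trans (add_le_add ((abs_add_le _ _).trans (add_le_add ha hb)) hc'))
    A B hA' hB'
  have hK : (E1 + M) / n ≤ (E1 + M + 1) / n :=
    div_le_div_of_nonneg_right (by linarith) hn0.le
  exact ⟨b₁, b₂, h, h', h1.trans hK, h2.trans hK⟩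
end
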